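/- Every balanced quadtree can be properly colored with 6 colors under corner adjacency; that is, for every balanced quadtree Q there exists a function f : Q → Fin 6 such that f(s) ≠ f(t) whenever s and t are corner-adjacent squares of Q. -/

import Mathlib

/-- A dyadic square `[i/2^k, (i+1)/2^k] × [j/2^k, (j+1)/2^k] ⊆ [0,1]²`,
recorded by its level `k` and coordinates `i, j < 2^k`. -/
structure DyadicSquare where
  k : ℕ
  i : ℕ
  j : ℕ
  hi : i < 2 ^ k
  hj : j < 2 ^ k
deriving DecidableEq

namespace DyadicSquare

/-- The subset of the plane occupied by a dyadic square. -/
def region (s : DyadicSquare) : Set (ℝ × ℝ) :=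
  Set.Icc ((s.i : ℝ) / 2 ^ s.k) (((s.i : ℝ) + 1) / 2 ^ s.k) ×ˢ
    Set.Icc ((s.j : ℝ) / 2 ^ s.k) (((s.j : ℝ) + 1) / 2 ^ s.k)

/-- Two squares are edge-adjacent if they are distinct and their intersection
contains more than one point (a segment of positive length). -/
def EdgeAdj (s t : DyadicSquare) : Prop :=
  s ≠ t ∧ (s.region ∩ t.region).Nontrivial

/-- Two squares are corner-adjacent if they are distinct and their intersection
is nonempty (they share at least a corner point or part of an edge). -/
def CornerAdj (s t : DyadicSquare) : Prop :=
  s ≠ t ∧ (s.region ∩ t.region).Nonempty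

end DyadicSquare

/-- A finite set of dyadic squares has pairwise disjoint interiors. -/
def PairwiseDisjointInteriors (Q : Finset DyadicSquare) : Prop :=
  (Q : Set DyadicSquare).Pairwise fun s t =>
    interior s.region ∩ interior t.region = ∅

/-- A quadtree: a finite set of dyadic squares with pairwise disjoint interiors
whose union is the unit square `[0,1]²`. -/
def IsQuadtree (Q : Finset DyadicSquare) : Prop :=
  PairwiseDisjointInteriors Q ∧
    (⋃ s ∈ Q, s.region) = Set.Icc (0 : ℝ) 1 ×ˢ Set.Icc (0 : ℝ) 1

/-- A quadtree is balanced if any two edge-adjacent squares have side lengths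
(`2^{-k}`) within a factor of two of each other. -/
def IsBalanced (Q : Finset DyadicSquare) : Prop :=
  ∀ s ∈ Q, ∀ t ∈ Q, DyadicSquare.EdgeAdj s t → s.k ≤ t.k + 1 ∧ t.k ≤ s.k + 1

/-!
Colour greedily, with the squares ordered lexicographically by their lower left corners. It
suffices that each square `s` has at most five preceding corner-neighbours `t`. Such a `t` lies to
the left of `s` or directly below it, so near the lower left, middle left or upper left point of `s`
its interior fills one of five fixed quadrants. The middle left point enters through balance: an
edge-neighbour of at least half the side length of `s` whose bottom is strictly between the bottom
and the top of `s` starts exactly at mid-height. Since interiors are disjoint, distinct neighbours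
fill distinct quadrants.
-/

open Filter Set Topology

open scoped Finset

theorem card_le_of_disjoint_of_exists_mem_filter {α β ι : Type*} [Fintype ι] {S : Finset α}
    {A : α → Set β} (hA : (S : Set α).PairwiseDisjoint A) {F : ι → Filter β}
    (hF : ∀ i, (F i).NeBot) (hAF : ∀ a ∈ S, ∃ i, A a ∈ F i) : #S ≤ Fintype.card ι := by
  refine Finset.card_le_card_of_forall_subsingleton (t := Finset.univ) (fun a i => A a ∈ F i)
    (fun a ha => (hAF a ha).imp fun i hi => ⟨Finset.mem_univ i, hi⟩) ?_
  rintro i - a ⟨ha, hai⟩ b ⟨hb, hbi⟩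
  exact hA.elim ha hb (Set.not_disjoint_iff_nonempty_inter.2
    ((hF i).nonempty_of_mem (inter_mem hai hbi)))

section GreedyColoring

variable {α : Type*} {G : SimpleGraph α} [DecidableRel G.Adj]

theorem exists_coloring_insert {γ : Type*} [Fintype γ] [DecidableEq α] {S : Finset α} {a : α}
    (ha : a ∉ S) (hdeg : #{b ∈ S | G.Adj a b} < Fintype.card γ) {f : α → γ}
    (hf : ∀ b ∈ S, ∀ c ∈ S, G.Adj b c → f b ≠ f c) :
    ∃ g : α → γ, ∀ b ∈ insert a S, ∀ c ∈ insert a S, G.Adj b c → g b ≠ g c := by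
  classical
  obtain ⟨x, -, hx⟩ := Finset.exists_mem_notMem_of_card_lt_card
    (Finset.card_image_le (f := f) |>.trans_lt hdeg)
  have hfresh (b : α) (hb : b ∈ S) (hab : G.Adj a b) : x ≠ f b := fun h =>
    hx (Finset.mem_image.2 ⟨b, Finset.mem_filter.2 ⟨hb, hab⟩, h.symm⟩)
  have hold (b : α) (hb : b ∈ S) : Function.update f a x b = f b :=
    Function.update_of_ne (ne_of_mem_of_not_mem hb ha) x f
  refine ⟨Function.update f a x, fun b hb c hc hbc => ?_⟩
  rcases Finset.mem_insert.1 hb with rfl | hbS <;> rcases Finset.mem_insert.1 hc with rfl | hcS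
  · exact absurd hbc G.irrefl
  · rw [Function.update_self, hold c hcS]
    exact hfresh c hcS hbc
  · rw [Function.update_self, hold b hbS]
    exact (hfresh b hbS hbc.symm).symm
  · rw [hold b hbS, hold c hcS]
    exact hf b hbS c hcS hbc

theorem exists_coloring_of_degenerate {n : ℕ} {S : Finset α}
    (h : ∀ T ⊆ S, T.Nonempty → ∃ a ∈ T, #{b ∈ T | G.Adj a b} ≤ n) :
    ∃ f : α → Fin (n + 1), ∀ a ∈ S, ∀ b ∈ S, G.Adj a b → f a ≠ f b := by
  classical
  induction S using Finset.strongInduction with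
  | H S ih =>
    rcases S.eq_empty_or_nonempty with rfl | hS
    · exact ⟨0, by simp⟩
    obtain ⟨a, ha, hdeg⟩ := h S subset_rfl hS
    obtain ⟨f, hf⟩ := ih (S.erase a) (Finset.erase_ssubset ha) fun T hT =>
      h T (hT.trans (Finset.erase_subset a S))
    rw [← Finset.insert_erase ha]
    have hdeg_erase : #{b ∈ S.erase a | G.Adj a b} ≤ n :=
      (Finset.card_le_card (Finset.filter_subset_filter _ (Finset.erase_subset a S))).trans hdeg
    exact exists_coloring_insert (Finset.notMem_erase a S)
      (by rwa [Fintype.card_fin, Nat.lt_succ_iff]) hf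

end GreedyColoring

theorem dyadic_eq_midpoint_of_lt_of_lt {k m i j : ℕ} (hkm : k ≤ m + 1)
    (hlt : (j : ℝ) / 2 ^ m < i / 2 ^ k)
    (hgt : (i : ℝ) / 2 ^ k < (j + 1) / 2 ^ m) :
    (i : ℝ) / 2 ^ k = midpoint ℝ (j / 2 ^ m : ℝ) ((j + 1) / 2 ^ m) := by
  obtain ⟨d, hd⟩ := Nat.exists_eq_add_of_le hkm
  have hi : (i : ℝ) / 2 ^ k = (i * 2 ^ d : ℕ) / 2 ^ (m + 1) := by
    rw [hd, pow_add]
    push_cast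
    field_simp
  have hj (x : ℝ) : x / 2 ^ m = 2 * x / 2 ^ (m + 1) := by
    rw [pow_succ]
    field_simp
  rw [hi, hj, div_lt_div_iff_of_pos_right (by positivity)] at hlt hgt
  have hlower : 2 * j < i * 2 ^ d := by exact_mod_cast hlt
  have hupper : i * 2 ^ d < 2 * (j + 1) := by exact_mod_cast hgt
  have hodd : i * 2 ^ d = 2 * j + 1 := by omega
  rw [hi, hodd, midpoint_eq_smul_add, smul_eq_mul, invOf_eq_inv, pow_succ]
  push_cast
  field_simp
  ring

namespace DyadicSquare

/-- The left side of a square, as the abscissa of its points. -/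
noncomputable def left (s : DyadicSquare) : ℝ := s.i / 2 ^ s.k

/-- The right side of a square, as the abscissa of its points. -/
noncomputable def right (s : DyadicSquare) : ℝ := (s.i + 1) / 2 ^ s.k

/-- The lower side of a square, as the ordinate of its points. -/
noncomputable def bottom (s : DyadicSquare) : ℝ := s.j / 2 ^ s.k

/-- The upper side of a square, as the ordinate of its points. -/
noncomputable def top (s : DyadicSquare) : ℝ := (s.j + 1) / 2 ^ s.k

/-- The lower left corner of a square, in the plane ordered lexicographically; squares are
coloured in the order of these corners. -/
noncomputable def lowerLeft (s : DyadicSquare) : ℝ ×ₗ ℝ := toLex (s.left, s.bottom)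

/-- The graph of corner adjacency on dyadic squares. -/
def cornerGraph : SimpleGraph DyadicSquare where
  Adj := CornerAdj
  symm := ⟨fun _ _ h => ⟨h.1.symm, by simpa only [Set.inter_comm] using h.2⟩⟩
  loopless := ⟨fun _ h => h.1 rfl⟩

/-- Five quadrants at the lower left, middle left and upper left points of a square, one of which
is filled by each corner-neighbour preceding the square. A quadrant is encoded as the filter of the
sets that fill it near its apex. -/
noncomputable def leftQuadrants (s : DyadicSquare) : Fin 5 → Filter (ℝ × ℝ) :=
  ![𝓝[<] s.left ×ˢ 𝓝[<] s.bottom,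
    𝓝[<] s.left ×ˢ 𝓝[>] s.bottom,
    𝓝[<] s.left ×ˢ 𝓝[>] midpoint ℝ s.bottom s.top,
    𝓝[<] s.left ×ˢ 𝓝[>] s.top,
    𝓝[>] s.left ×ˢ 𝓝[<] s.bottom]

variable {s t : DyadicSquare}

theorem leftQuadrants_neBot (s : DyadicSquare) (q : Fin 5) : (s.leftQuadrants q).NeBot := by
  fin_cases q <;> exact NeBot.prod inferInstance inferInstance

theorem left_lt_right (s : DyadicSquare) : s.left < s.right := by
  unfold left right
  gcongr
  exact lt_add_one _

theorem bottom_lt_top (s : DyadicSquare) : s.bottom < s.top := by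
  unfold bottom top
  gcongr
  exact lt_add_one _

theorem region_eq (s : DyadicSquare) :
    s.region = Icc s.left s.right ×ˢ Icc s.bottom s.top :=
  rfl

theorem interior_region (s : DyadicSquare) :
    interior s.region = Ioo s.left s.right ×ˢ Ioo s.bottom s.top := by
  rw [region_eq, interior_prod_eq, interior_Icc, interior_Icc]

theorem interior_region_mem_prod {F G : Filter ℝ} (hF : Ioo s.left s.right ∈ F)
    (hG : Ioo s.bottom s.top ∈ G) : interior s.region ∈ F ×ˢ G :=
  s.interior_region ▸ prod_mem_prod hF hG

theorem bottom_eq_midpoint (hk : t.k ≤ s.k + 1) (hlt : s.bottom < t.bottom)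
    (hgt : t.bottom < s.top) : t.bottom = midpoint ℝ s.bottom s.top :=
  dyadic_eq_midpoint_of_lt_of_lt hk hlt hgt

theorem edgeAdj_of_left_mem_Ioc (hleft : s.left ∈ Ioc t.left t.right)
    (hst : s.bottom < t.top) (hts : t.bottom < s.top) : EdgeAdj s t := by
  refine ⟨fun h => hleft.1.ne (h ▸ rfl), ?_⟩
  have hlt : max s.bottom t.bottom < min s.top t.top :=
    max_lt (lt_min s.bottom_lt_top hst) (lt_min hts t.bottom_lt_top)
  have hmem {y : ℝ} (hy : y ∈ Icc (max s.bottom t.bottom) (min s.top t.top)) :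
      (s.left, y) ∈ s.region ∩ t.region := by
    rw [← Icc_inter_Icc] at hy
    exact ⟨⟨⟨le_rfl, s.left_lt_right.le⟩, hy.1⟩, ⟨⟨hleft.1.le, hleft.2⟩, hy.2⟩⟩
  exact ⟨_, hmem (left_mem_Icc.2 hlt.le), _, hmem (right_mem_Icc.2 hlt.le),
    fun h => hlt.ne (congrArg Prod.snd h)⟩

theorem exists_quadrant_of_left_lt (hbal : EdgeAdj s t → t.k ≤ s.k + 1)
    (hleft : s.left ∈ Ioc t.left t.right) (hst : s.bottom ≤ t.top) (hts : t.bottom ≤ s.top) :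
    ∃ q, interior t.region ∈ s.leftQuadrants q := by
  have hF : Ioo t.left t.right ∈ 𝓝[<] s.left := Ioo_mem_nhdsLT_of_mem hleft
  have hfill {G : Filter ℝ} (hG : Ioo t.bottom t.top ∈ G) :
      interior t.region ∈ 𝓝[<] s.left ×ˢ G :=
    interior_region_mem_prod hF hG
  have hbottom : Ioo t.bottom t.top ∈ 𝓝[>] t.bottom := Ioo_mem_nhdsGT t.bottom_lt_top
  rcases hst.eq_or_lt with hbelow | hst
  · exact ⟨0, hfill (Ioo_mem_nhdsLT_of_mem ⟨hbelow ▸ t.bottom_lt_top, hbelow.le⟩)⟩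
  rcases le_or_gt t.bottom s.bottom with hlow | hlow
  · exact ⟨1, hfill (Ioo_mem_nhdsGT_of_mem ⟨hlow, hst⟩)⟩
  rcases hts.eq_or_lt with habove | hts
  · exact ⟨3, hfill (habove ▸ hbottom)⟩
  · have hmid := bottom_eq_midpoint (hbal (edgeAdj_of_left_mem_Ioc hleft hst hts)) hlow hts
    exact ⟨2, hfill (hmid ▸ hbottom)⟩

theorem top_le_bottom_of_left_eq (hdisj : Disjoint (interior s.region) (interior t.region))
    (hleft : t.left = s.left) (hle : t.bottom ≤ s.bottom) : t.top ≤ s.bottom := by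
  by_contra! hlt
  have hs : interior s.region ∈ 𝓝[>] s.left ×ˢ 𝓝[>] s.bottom :=
    interior_region_mem_prod (Ioo_mem_nhdsGT s.left_lt_right) (Ioo_mem_nhdsGT s.bottom_lt_top)
  have ht : interior t.region ∈ 𝓝[>] s.left ×ˢ 𝓝[>] s.bottom :=
    interior_region_mem_prod (hleft ▸ Ioo_mem_nhdsGT t.left_lt_right)
      (Ioo_mem_nhdsGT_of_mem ⟨hle, hlt⟩)
  exact (Filter.nonempty_of_mem (inter_mem hs ht)).ne_empty hdisj.inter_eq

theorem exists_quadrant_of_lowerLeft_le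
    (hdisj : Disjoint (interior s.region) (interior t.region))
    (hbal : EdgeAdj s t → t.k ≤ s.k + 1) (hmeet : (s.region ∩ t.region).Nonempty)
    (hle : t.lowerLeft ≤ s.lowerLeft) : ∃ q, interior t.region ∈ s.leftQuadrants q := by
  obtain ⟨_, ⟨hsx, hsy⟩, htx, hty⟩ := hmeet
  have hst : s.bottom ≤ t.top := hsy.1.trans hty.2
  rcases Prod.Lex.toLex_le_toLex.1 hle with hlt | ⟨hleft, hbottom⟩
  · exact exists_quadrant_of_left_lt hbal ⟨hlt, hsx.1.trans htx.2⟩ hst (hty.1.trans hsy.2)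
  · change t.left = s.left at hleft
    have htop : t.top = s.bottom := (top_le_bottom_of_left_eq hdisj hleft hbottom).antisymm hst
    exact ⟨4, interior_region_mem_prod (hleft ▸ Ioo_mem_nhdsGT t.left_lt_right)
      (htop ▸ Ioo_mem_nhdsLT t.bottom_lt_top)⟩

end DyadicSquare

open DyadicSquare

theorem IsBalanced.mono {Q T : Finset DyadicSquare} (hQ : IsBalanced Q) (hTQ : T ⊆ Q) :
    IsBalanced T :=
  fun s hs t ht => hQ s (hTQ hs) t (hTQ ht)

theorem PairwiseDisjointInteriors.mono {Q T : Finset DyadicSquare}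
    (hQ : PairwiseDisjointInteriors Q) (hTQ : T ⊆ Q) : PairwiseDisjointInteriors T :=
  Set.Pairwise.mono (Finset.coe_subset.2 hTQ) hQ

theorem PairwiseDisjointInteriors.pairwiseDisjoint {Q : Finset DyadicSquare}
    (hQ : PairwiseDisjointInteriors Q) :
    (Q : Set DyadicSquare).PairwiseDisjoint fun s => interior s.region :=
  fun _ hs _ ht hst => Set.disjoint_iff_inter_eq_empty.2 (hQ hs ht hst)

theorem card_cornerAdj_le_five_of_forall_lowerLeft_le {T : Finset DyadicSquare}
    [DecidableRel cornerGraph.Adj]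
    (hT : PairwiseDisjointInteriors T) (hbal : IsBalanced T) {s : DyadicSquare} (hs : s ∈ T)
    (hmax : ∀ t ∈ T, t.lowerLeft ≤ s.lowerLeft) : #{t ∈ T | cornerGraph.Adj s t} ≤ 5 := by
  refine card_le_of_disjoint_of_exists_mem_filter
    (hT.pairwiseDisjoint.subset (Finset.coe_subset.2 (Finset.filter_subset _ T)))
    s.leftQuadrants_neBot fun t ht => ?_
  obtain ⟨ht, hadj⟩ := Finset.mem_filter.1 ht
  exact exists_quadrant_of_lowerLeft_le (hT.pairwiseDisjoint hs ht hadj.1)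
    (fun hedge => (hbal s hs t ht hedge).2) hadj.2 (hmax t ht)

theorem balanced_quadtree_six_colorable_corner_general (Q : Finset DyadicSquare)
    (hQ : PairwiseDisjointInteriors Q) (hbal : IsBalanced Q) :
    ∃ f : DyadicSquare → Fin 6,
      ∀ s ∈ Q, ∀ t ∈ Q, DyadicSquare.CornerAdj s t → f s ≠ f t := by
  classical
  refine exists_coloring_of_degenerate (G := cornerGraph) fun T hTQ hT => ?_
  obtain ⟨s, hs, hmax⟩ := T.exists_max_image lowerLeft hT
  exact ⟨s, hs,
    card_cornerAdj_le_five_of_forall_lowerLeft_le (hQ.mono hTQ) (hbal.mono hTQ) hs hmax⟩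

/-- Every balanced quadtree can be properly 6-colored under corner adjacency. -/
theorem balanced_quadtree_six_colorable_corner (Q : Finset DyadicSquare)
    (hQ : IsQuadtree Q) (hbal : IsBalanced Q) :
    ∃ f : DyadicSquare → Fin 6,
      ∀ s ∈ Q, ∀ t ∈ Q, DyadicSquare.CornerAdj s t → f s ≠ f t :=
  balanced_quadtree_six_colorable_corner_general Q hQ.1 hbal
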